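/- The infinite product ∏_{k=2}^{∞} (2^{k−1}+1)^{e^{−k}/(k−1)!} converges, and 2^{1 + e^{−1} − e^{1/e − 1} − e^{1/e − 2}} · ∏_{k=2}^{∞} (2^{k−1}+1)^{e^{−k}/(k−1)!} < 1.89756. Moreover, ∑_{k=2}^{∞} k·e^{−k}/(k−1)! = e^{1/e−1} + e^{1/e−2} − e^{−1}. -/

import Mathlib

/-!
Put `w k = e^{-k}/(k-1)!`. The exponent of `2` in front of the product is `1 - ∑_{k≥2} k * w k`,
where the sum is evaluated with the exponential series at `1/e`. Distributing this power of `2`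
over the factors, the logarithm of the whole quantity becomes
`log 2 - ∑_{k≥2} w k * log (2^k / (2^{k-1}+1))`. Every term of this series is nonnegative, so
truncating it after `k = 6` gives an upper bound with no tail estimate, and this bound is already
below `log 1.89756`. Convergence of the product follows by comparing
`log (2^{k-1}+1) ≤ k * log 2` with the series `∑ k * w k`.
-/

/-- The factor `(2^{k-1}+1)^{e^{-k}/(k-1)!}` for `k ≥ 2`, and `1` for `k < 2`. -/
noncomputable def starFactor (k : ℕ) : ℝ :=
  if k < 2 then 1
  else ((2 : ℝ) ^ (k - 1) + 1) ^ (Real.exp (-(k : ℝ)) / (Nat.factorial (k - 1)))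

open Real Finset

/-- Writing `k = (k - 1) + 1` splits `∑_{k≥2} k e^{-k}/(k-1)!` into two multiples of the
exponential series at `e^{-1}`, the second one without its constant term. -/
lemma hasSum_weighted :
    HasSum (fun k : ℕ =>
        if k < 2 then 0 else (k : ℝ) * Real.exp (-(k : ℝ)) / (Nat.factorial (k - 1)))
      (Real.exp ((Real.exp 1)⁻¹ - 1) + Real.exp ((Real.exp 1)⁻¹ - 2) - Real.exp (-1)) := by
  have h0 : HasSum (fun n : ℕ => (exp (-1)) ^ n / (n.factorial : ℝ)) (exp (exp (-1))) := by
    have := NormedSpace.expSeries_div_hasSum_exp (𝔸 := ℝ) (exp (-1))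
    rwa [← Real.exp_eq_exp_ℝ] at this
  rw [← hasSum_nat_add_iff' 2]
  have h1 := ((hasSum_nat_add_iff' 1).2 h0).mul_left (exp (-1))
  have h2 := h0.mul_left (exp (-2))
  have e2 : exp (-2 : ℝ) = exp (-1) ^ 2 := by rw [← Real.exp_nat_mul]; norm_num
  convert! h1.add h2 using 1
  · ext n
    rw [if_neg (by omega)]
    have e3 : exp (-((n + 2 : ℕ) : ℝ)) = exp (-1) ^ (n + 2) := by
      rw [← Real.exp_nat_mul]; congr 1; ring
    have hf : (n.factorial : ℝ) ≠ 0 := by positivity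
    have hn : (n : ℝ) + 1 ≠ 0 := by positivity
    rw [e2, e3, show n + 2 - 1 = n + 1 from rfl, Nat.factorial_succ]
    push_cast
    field_simp
    ring
  · rw [Real.exp_sub, Real.exp_sub, Real.exp_neg 1, Real.exp_neg 2]
    simp [sum_range_succ]
    ring

lemma log_starFactor {k : ℕ} (hk : ¬ k < 2) :
    log (starFactor k) = exp (-(k : ℝ)) / (Nat.factorial (k - 1)) * log (2 ^ (k - 1) + 1) := by
  rw [starFactor, if_neg hk, Real.log_rpow (by positivity)]

lemma starFactor_pos (k : ℕ) : 0 < starFactor k := by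
  unfold starFactor
  split_ifs <;> positivity

lemma log_starFactor_nonneg (k : ℕ) : 0 ≤ log (starFactor k) := by
  by_cases hk : k < 2
  · simp [starFactor, hk]
  · rw [log_starFactor hk]
    have : 0 ≤ log ((2 : ℝ) ^ (k - 1) + 1) :=
      Real.log_nonneg (by linarith [pow_pos (two_pos : (0 : ℝ) < 2) (k - 1)])
    positivity

lemma log_starFactor_le (k : ℕ) :
    log (starFactor k) ≤
      (if k < 2 then 0 else (k : ℝ) * exp (-(k : ℝ)) / (Nat.factorial (k - 1))) * log 2 := by
  by_cases hk : k < 2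
  · simp [starFactor, hk]
  · rw [log_starFactor hk, if_neg hk]
    have h : log ((2 : ℝ) ^ (k - 1) + 1) ≤ k * log 2 := by
      rw [← Real.log_pow]
      apply Real.log_le_log (by positivity)
      obtain ⟨m, rfl⟩ : ∃ m, k = m + 1 := ⟨k - 1, by omega⟩
      have : (1 : ℝ) ≤ 2 ^ m := one_le_pow₀ (by norm_num)
      rw [Nat.add_sub_cancel, pow_succ]
      linarith
    calc _ ≤ exp (-(k : ℝ)) / (Nat.factorial (k - 1)) * (k * log 2) := by gcongr
      _ = _ := by ring

lemma summable_log_starFactor : Summable fun k => log (starFactor k) :=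
  Summable.of_nonneg_of_le log_starFactor_nonneg log_starFactor_le
    (hasSum_weighted.summable.mul_right _)

/-- Lower bound for `log ((1+x)/(1-x))` from five terms of the `artanh` series. -/
lemma le_log_of_artanh {x y c : ℝ} (h0 : 0 ≤ x) (h1 : x < 1) (hy : (1 + x) / (1 - x) = y)
    (hc : c ≤ 2 * ∑ i ∈ range 5, x ^ (2 * i + 1) / (2 * i + 1)) : c ≤ log y := by
  have := Real.sum_range_le_log_div h0 h1 5
  rw [hy] at this
  linarith

/-- The term of index `k` of the regrouped series, bounded below by means of `0.3678794 ≤ e^{-1}` and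
`c ≤ log y`, where `y = 2^k / (2^{k-1}+1)`. -/
lemma term_lower {k : ℕ} (hk : ¬ k < 2) {c y : ℝ} (hc0 : 0 ≤ c)
    (hc : c ≤ log y) (hy : y = 2 ^ k / (2 ^ (k - 1) + 1)) :
    0.3678794 ^ k / (Nat.factorial (k - 1)) * c ≤
      (if k < 2 then 0 else (k : ℝ) * exp (-(k : ℝ)) / (Nat.factorial (k - 1))) * log 2
        - log (starFactor k) := by
  rw [log_starFactor hk, if_neg hk]
  have hr : (0.3678794 : ℝ) ≤ exp (-1) := by
    rw [Real.exp_neg, le_inv_comm₀ (by norm_num) (Real.exp_pos 1)]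
    exact Real.exp_one_lt_d9.le.trans (by norm_num)
  have e3 : exp (-(k : ℝ)) = exp (-1) ^ k := by
    rw [← Real.exp_nat_mul]; congr 1; ring
  have hlog : log y = k * log 2 - log (2 ^ (k - 1) + 1) := by
    rw [hy, Real.log_div (by positivity) (by positivity), Real.log_pow]
  calc _ ≤ exp (-1) ^ k / (Nat.factorial (k - 1)) * log y := by gcongr
    _ = _ := by rw [hlog, e3]; ring

/-- `1.89756 / 2 = 47439 / 50000`, and `2561 / 97439` is the matching `artanh` argument. -/
lemma log_target : log 2 - log 1.89756 ≤ 0.0525784 := by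
  have := Real.log_div_le_sum_range_add (x := 2561 / 97439) (by norm_num) (by norm_num) 3
  rw [← Real.log_div (by norm_num) (by norm_num)]
  rw [show ((1 : ℝ) + 2561 / 97439) / (1 - 2561 / 97439) = 2 / 1.89756 by norm_num] at this
  norm_num [sum_range_succ] at this ⊢
  linarith

/-- The infinite product `∏_{k≥2} (2^{k-1}+1)^{e^{-k}/(k-1)!}` converges,
`2^{1 + e^{-1} - e^{1/e-1} - e^{1/e-2}} ∏_{k≥2} (2^{k-1}+1)^{e^{-k}/(k-1)!} < 1.89756`,
and `∑_{k≥2} k e^{-k}/(k-1)! = e^{1/e-1} + e^{1/e-2} - e^{-1}`. -/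
theorem star_product_upper_bound :
    Multipliable starFactor ∧
    (2 : ℝ) ^ (1 + Real.exp (-1) - Real.exp ((Real.exp 1)⁻¹ - 1)
        - Real.exp ((Real.exp 1)⁻¹ - 2)) * (∏' k : ℕ, starFactor k) < 1.89756 ∧
    HasSum (fun k : ℕ =>
        if k < 2 then 0 else (k : ℝ) * Real.exp (-(k : ℝ)) / (Nat.factorial (k - 1)))
      (Real.exp ((Real.exp 1)⁻¹ - 1) + Real.exp ((Real.exp 1)⁻¹ - 2) - Real.exp (-1)) := by
  refine ⟨Real.multipliable_of_summable_log starFactor_pos summable_log_starFactor, ?_,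
    hasSum_weighted⟩
  rw [← Real.rexp_tsum_eq_tprod starFactor_pos summable_log_starFactor,
    Real.rpow_def_of_pos two_pos, ← Real.exp_add, ← Real.lt_log_iff_exp_lt (by norm_num)]
  have hB := (hasSum_weighted.mul_right (log 2)).sub summable_log_starFactor.hasSum
  have hle := sum_le_hasSum (Finset.Icc 2 6)
    (fun k _ => sub_nonneg.2 (log_starFactor_le k)) hB
  rw [show Finset.Icc 2 6 = {2, 3, 4, 5, 6} by rfl] at hle
  rw [sum_insert (by decide), sum_insert (by decide), sum_insert (by decide),
    sum_insert (by decide), sum_singleton] at hle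
  -- The `artanh` argument belonging to `y` is `(y - 1) / (y + 1)`.
  have t2 := term_lower (k := 2) (by norm_num) (c := 0.287682) (by norm_num)
    (le_log_of_artanh (x := 1 / 7) (y := 4 / 3) (by norm_num) (by norm_num) (by norm_num)
      (by norm_num [sum_range_succ])) (by norm_num)
  have t3 := term_lower (k := 3) (by norm_num) (c := 0.47000) (by norm_num)
    (le_log_of_artanh (x := 3 / 13) (y := 8 / 5) (by norm_num) (by norm_num) (by norm_num)
      (by norm_num [sum_range_succ])) (by norm_num)
  have t4 := term_lower (k := 4) (by norm_num) (c := 0.57536) (by norm_num)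
    (le_log_of_artanh (x := 7 / 25) (y := 16 / 9) (by norm_num) (by norm_num) (by norm_num)
      (by norm_num [sum_range_succ])) (by norm_num)
  have t5 := term_lower (k := 5) (by norm_num) (c := 0.6325) (by norm_num)
    (le_log_of_artanh (x := 15 / 49) (y := 32 / 17) (by norm_num) (by norm_num) (by norm_num)
      (by norm_num [sum_range_succ])) (by norm_num)
  have t6 := term_lower (k := 6) (by norm_num) (c := 0.6623) (by norm_num)
    (le_log_of_artanh (x := 31 / 97) (y := 64 / 33) (by norm_num) (by norm_num) (by norm_num)
      (by norm_num [sum_range_succ])) (by norm_num)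
  have hnum : (0.0525784 : ℝ) <
      0.3678794 ^ 2 / (Nat.factorial (2 - 1)) * 0.287682
      + 0.3678794 ^ 3 / (Nat.factorial (3 - 1)) * 0.47000
      + 0.3678794 ^ 4 / (Nat.factorial (4 - 1)) * 0.57536
      + 0.3678794 ^ 5 / (Nat.factorial (5 - 1)) * 0.6325
      + 0.3678794 ^ 6 / (Nat.factorial (6 - 1)) * 0.6623 := by
    norm_num [Nat.factorial]
  have := log_target
  linarith
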